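/- arXiv:2009.08327 — 3 statements merged into one kernel-verified Lean document; each statement's English description precedes it below -/
import Mathlib

section
/- Let N and s be integers with 0 ≤ s < N - 2 and set n = N - s. Let α_0 < α_1 < ... < α_n be integers with 0 ≤ α_0 and α_n ≤ N, and define y_k = -cos(α_k π / N), so that y_0 < y_1 < ... < y_n. Then for every x ∈ [-1, 1] with x ≠ y_i for all i, Σ_{i=0}^n 1/|x - y_i| ≤ ((s+1)(s+3)π²/4 + 1)·(1 + π²(s+1)·ln(N - s)) · |Σ_{j=0}^n (-1)^j/(x - y_j)|. -/
/-- Comparison of sines whose arguments satisfy `u ≤ K v` with `v ≤ π / 2`. -/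
theorem sin_le_mul_sin_of_le_mul {u v K : ℝ} (hu : 0 ≤ u) (hv : 0 ≤ v) (hv2 : v ≤ Real.pi / 2)
    (hK : 0 ≤ K) (h : u ≤ K * v) : Real.sin u ≤ K * (Real.pi / 2) * Real.sin v := by
  have hs := Real.mul_le_sin hv hv2
  have hpi := Real.pi_pos
  have hv' : v ≤ Real.pi / 2 * Real.sin v := by
    calc v = Real.pi / 2 * (2 / Real.pi * v) := by field_simp
      _ ≤ _ := by gcongr
  calc Real.sin u ≤ u := Real.sin_le hu
    _ ≤ K * v := h
    _ ≤ K * (Real.pi / 2 * Real.sin v) := by gcongr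
    _ = _ := by ring

/-- Comparison of sines on `[0, π]` whose arguments satisfy `v ≤ u ≤ K v`. -/
theorem sin_le_mul_sin_of_le_of_le_mul {u v K : ℝ} (hv : 0 ≤ v) (hvu : v ≤ u)
    (hu : u ≤ Real.pi) (hK : 1 ≤ K) (h : u ≤ K * v) :
    Real.sin u ≤ K * (Real.pi / 2) * Real.sin v := by
  rcases le_total v (Real.pi / 2) with h2 | h2
  · exact sin_le_mul_sin_of_le_mul (hv.trans hvu) hv h2 (by linarith) h
  · have hle : Real.sin u ≤ Real.sin v := by
      rw [← Real.sin_pi_sub u, ← Real.sin_pi_sub v]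
      exact Real.sin_le_sin_of_le_of_le_pi_div_two (by linarith) (by linarith) (by linarith)
    have h0 : 0 ≤ Real.sin v := Real.sin_nonneg_of_nonneg_of_le_pi hv (hvu.trans hu)
    have h1 : 1 ≤ K * (Real.pi / 2) := by nlinarith [Real.two_le_pi]
    exact hle.trans (le_mul_of_one_le_left h0 h1)

/-- Comparison of distances between Chebyshev points, the first pair lying to the right of the
second. -/
theorem cos_sub_cos_le_of_add_le_add {N K L p q p' q' : ℝ} (hN : 0 < N) (hpq : p ≤ q)
    (hq : q ≤ N) (hp' : 0 ≤ p') (hpq' : p' ≤ q') (hq' : q' ≤ N) (hsum : p' + q' ≤ p + q)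
    (hK : 1 ≤ K) (hL : 0 ≤ L) (hKle : p + q ≤ K * (p' + q')) (hLle : q - p ≤ L * (q' - p')) :
    Real.cos (p * Real.pi / N) - Real.cos (q * Real.pi / N) ≤
      K * L * (Real.pi ^ 2 / 4) *
        (Real.cos (p' * Real.pi / N) - Real.cos (q' * Real.pi / N)) := by
  have hpi := Real.pi_pos
  have key : ∀ a b : ℝ, Real.cos (a * Real.pi / N) - Real.cos (b * Real.pi / N) =
      2 * Real.sin ((a + b) * (Real.pi / (2 * N))) *
        Real.sin ((b - a) * (Real.pi / (2 * N))) := by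
    intro a b
    rw [Real.cos_sub_cos, neg_mul, neg_mul, ← mul_neg, ← Real.sin_neg]
    congr 2
    · congr 1
      field_simp
    · field_simp
      ring
  rw [key, key]
  set φ := Real.pi / (2 * N) with hφ
  have hφ0 : 0 < φ := by positivity
  have hNφ : N * φ = Real.pi / 2 := by rw [hφ]; field_simp
  have h1 : Real.sin ((p + q) * φ) ≤ K * (Real.pi / 2) * Real.sin ((p' + q') * φ) := by
    apply sin_le_mul_sin_of_le_of_le_mul _ _ _ hK
    · rw [← mul_assoc]; gcongr
    · exact mul_nonneg (by linarith) hφ0.le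
    · gcongr
    · nlinarith
  have h2 : Real.sin ((q - p) * φ) ≤ L * (Real.pi / 2) * Real.sin ((q' - p') * φ) := by
    apply sin_le_mul_sin_of_le_mul _ _ _ hL
    · rw [← mul_assoc]; gcongr
    · exact mul_nonneg (by linarith) hφ0.le
    · exact mul_nonneg (by linarith) hφ0.le
    · nlinarith
  have h3 : 0 ≤ Real.sin ((q - p) * φ) :=
    Real.sin_nonneg_of_nonneg_of_le_pi (mul_nonneg (by linarith) hφ0.le) (by nlinarith)
  have h4 : 0 ≤ Real.sin ((p' + q') * φ) :=
    Real.sin_nonneg_of_nonneg_of_le_pi (mul_nonneg (by linarith) hφ0.le) (by nlinarith)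
  calc 2 * Real.sin ((p + q) * φ) * Real.sin ((q - p) * φ)
      ≤ 2 * (K * (Real.pi / 2) * Real.sin ((p' + q') * φ)) *
          (L * (Real.pi / 2) * Real.sin ((q' - p') * φ)) := by gcongr
    _ = _ := by ring

/-- Comparison of distances between Chebyshev points, the first pair lying to the left of the
second. -/
theorem cos_sub_cos_le_of_add_le_add' {N K L p q p' q' : ℝ} (hN : 0 < N) (hp : 0 ≤ p)
    (hpq : p ≤ q) (hp' : 0 ≤ p') (hpq' : p' ≤ q') (hq' : q' ≤ N) (hsum : p + q ≤ p' + q')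
    (hK : 1 ≤ K) (hL : 0 ≤ L) (hKle : 2 * N - (p + q) ≤ K * (2 * N - (p' + q')))
    (hLle : q - p ≤ L * (q' - p')) :
    Real.cos (p * Real.pi / N) - Real.cos (q * Real.pi / N) ≤
      K * L * (Real.pi ^ 2 / 4) *
        (Real.cos (p' * Real.pi / N) - Real.cos (q' * Real.pi / N)) := by
  have key : ∀ a : ℝ, Real.cos ((N - a) * Real.pi / N) = -Real.cos (a * Real.pi / N) := by
    intro a
    rw [← Real.cos_pi_sub]
    congr 1
    field_simp
  have := cos_sub_cos_le_of_add_le_add (N := N) (K := K) (L := L) (p := N - q) (q := N - p)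
    (p' := N - q') (q' := N - p') hN (by linarith) (by linarith) (by linarith) (by linarith)
    (by linarith) (by linarith) hK hL (by linarith) (by linarith)
  simp only [key] at this
  linarith

/-- Ratio of consecutive distances between Chebyshev points. -/
theorem cos_sub_cos_le_of_adjacent {N s p q r : ℝ} (hN : 0 < N) (hs : 0 ≤ s) (hp : 0 ≤ p)
    (hpq : p + 1 ≤ q) (hqr : q + 1 ≤ r) (hr : r ≤ N) (hrp : r ≤ p + s + 2) :
    Real.cos (q * Real.pi / N) - Real.cos (r * Real.pi / N) ≤
        (s + 1) * (s + 3) * Real.pi ^ 2 / 4 *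
          (Real.cos (p * Real.pi / N) - Real.cos (q * Real.pi / N)) ∧
      Real.cos (p * Real.pi / N) - Real.cos (q * Real.pi / N) ≤
        (s + 1) * (s + 3) * Real.pi ^ 2 / 4 *
          (Real.cos (q * Real.pi / N) - Real.cos (r * Real.pi / N)) := by
  have hR : (s + 1) * (s + 3) * Real.pi ^ 2 / 4 = (s + 3) * (s + 1) * (Real.pi ^ 2 / 4) := by
    ring
  rw [hR]
  constructor
  · apply cos_sub_cos_le_of_add_le_add hN <;> first | linarith | nlinarith
  · apply cos_sub_cos_le_of_add_le_add' hN <;> first | linarith | nlinarith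

/-- Ratio of the distances from a Chebyshev point to two points on its left. -/
theorem cos_sub_cos_le_div_mul_right {N s p q r c : ℝ} (hN : 0 < N) (hs : 0 ≤ s) (hp : 0 ≤ p)
    (hpq : p ≤ q) (hqr : q ≤ r) (hr : r ≤ N) (hc : 0 < c)
    (h : (r - q) * c ≤ (s + 1) * (r - p)) :
    Real.cos (q * Real.pi / N) - Real.cos (r * Real.pi / N) ≤
      Real.pi ^ 2 * (s + 1) / 2 / c *
        (Real.cos (p * Real.pi / N) - Real.cos (r * Real.pi / N)) := by
  have hC : Real.pi ^ 2 * (s + 1) / 2 / c = 2 * ((s + 1) / c) * (Real.pi ^ 2 / 4) := by ring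
  rw [hC]
  apply cos_sub_cos_le_of_add_le_add <;> try linarith
  · positivity
  · rwa [div_mul_eq_mul_div, le_div_iff₀ hc]

/-- Ratio of the distances from a Chebyshev point to two points on its right. -/
theorem cos_sub_cos_le_div_mul_left {N s p q r c : ℝ} (hN : 0 < N) (hs : 0 ≤ s) (hp : 0 ≤ p)
    (hpq : p ≤ q) (hqr : q ≤ r) (hr : r ≤ N) (hc : 0 < c)
    (h : (q - p) * c ≤ (s + 1) * (r - p)) :
    Real.cos (p * Real.pi / N) - Real.cos (q * Real.pi / N) ≤
      Real.pi ^ 2 * (s + 1) / 2 / c *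
        (Real.cos (p * Real.pi / N) - Real.cos (r * Real.pi / N)) := by
  have hC : Real.pi ^ 2 * (s + 1) / 2 / c = 2 * ((s + 1) / c) * (Real.pi ^ 2 / 4) := by ring
  rw [hC]
  apply cos_sub_cos_le_of_add_le_add' <;> try linarith
  · positivity
  · rwa [div_mul_eq_mul_div, le_div_iff₀ hc]

/-- Bounds for an alternating sum with nonnegative decreasing terms. -/
theorem alternating_sum_nonneg_and_le (m : ℕ) : ∀ f : ℕ → ℝ, (∀ i < m + 1, 0 ≤ f i) →
    (∀ i < m, f (i + 1) ≤ f i) →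
    0 ≤ ∑ i ∈ Finset.range (m + 1), (-1 : ℝ) ^ i * f i ∧
      ∑ i ∈ Finset.range (m + 1), (-1 : ℝ) ^ i * f i ≤ f 0 := by
  induction m with
  | zero => intro f hf _; simpa using hf 0 (by lia)
  | succ m ih =>
    intro f hf hanti
    have h := ih (fun i => f (i + 1)) (fun i hi => hf _ (by lia)) (fun i hi => hanti _ (by lia))
    have h1 := hanti 0 (by lia)
    rw [Finset.sum_range_succ']
    simp only [pow_succ, mul_neg, mul_one, neg_mul, Finset.sum_neg_distrib, pow_zero, one_mul]
    simp only [zero_add] at h h1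
    constructor <;> linarith [h.1, h.2]

/-- Reversal of the order of summation in an alternating sum. -/
theorem sum_alternating_reflect (m : ℕ) (d : ℕ → ℝ) :
    ∑ i ∈ Finset.range (m + 1), (-1 : ℝ) ^ i / d i =
      (-1) ^ m * ∑ i ∈ Finset.range (m + 1), (-1 : ℝ) ^ i / d (m - i) := by
  rw [← Finset.sum_range_reflect, Finset.mul_sum]
  refine Finset.sum_congr rfl fun i hi => ?_
  obtain ⟨j, rfl⟩ := Nat.exists_eq_add_of_le (Finset.mem_range_succ_iff.1 hi)
  rw [show i + j + 1 - 1 - i = j by lia, show i + j - i = j by lia, ← mul_div_assoc, pow_add,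
    mul_right_comm, ← mul_pow]
  simp

/-- Lower bound for the alternating sum of the reciprocals of increasing distances. -/
theorem le_alternating_sum_inv (m : ℕ) (d : ℕ → ℝ) {R : ℝ} (hR : 0 ≤ R) (h0 : 0 < d 0)
    (hmono : ∀ i < m, d i ≤ d (i + 1)) (hd : 0 < m → d 0 ≤ R * (d 1 - d 0)) :
    1 / (d 0 * (R + 1)) ≤ ∑ i ∈ Finset.range (m + 1), (-1 : ℝ) ^ i / d i := by
  have hpos : ∀ i, i < m + 1 → 0 < d i := by
    intro i
    induction i with
    | zero => exact fun _ => h0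
    | succ i ih => exact fun hi => (ih (by lia)).trans_le (hmono i (by lia))
  rcases m with _ | m
  · simp only [zero_add, Finset.sum_range_one, pow_zero]
    exact one_div_le_one_div_of_le h0 (le_mul_of_one_le_right h0.le (by linarith))
  · have h := (alternating_sum_nonneg_and_le m (fun i => 1 / d (i + 1))
      (fun i hi => (one_div_pos.2 (hpos _ (by lia))).le)
      (fun i hi => one_div_le_one_div_of_le (hpos _ (by lia)) (hmono _ (by lia)))).2
    have h1 : 0 < d 1 := hpos 1 (by lia)
    have h2 := hd (by lia)
    have h3 : 1 / (d 0 * (R + 1)) ≤ 1 / d 0 - 1 / d 1 := by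
      rw [div_sub_div _ _ h0.ne' h1.ne', div_le_div_iff₀ (by positivity) (by positivity)]
      nlinarith
    rw [Finset.sum_range_succ']
    simp only [mul_one_div] at h
    simp only [pow_succ, mul_neg, mul_one, neg_div, Finset.sum_neg_distrib, pow_zero]
    simp only [zero_add] at h
    linarith

/-- Upper bound for a sum of reciprocals in terms of the logarithm. -/
theorem sum_inv_le_add_mul_log (m : ℕ) (d : ℕ → ℝ) {M : ℝ} (hM : 0 ≤ M)
    (h : ∀ i, 1 ≤ i → i ≤ m → 1 / d i ≤ M / (i + 1)) :
    ∑ i ∈ Finset.range (m + 1), 1 / d i ≤ 1 / d 0 + M * Real.log (m + 1) := by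
  induction m with
  | zero => simp
  | succ m ih =>
    rw [Finset.sum_range_succ]
    have h1 := ih fun i hi hi' => h i hi (by lia)
    have h2 := h (m + 1) (by lia) le_rfl
    have h3 := Real.one_sub_inv_le_log_of_pos (x := ((m : ℝ) + 1 + 1) / (m + 1)) (by positivity)
    rw [Real.log_div (by positivity) (by positivity)] at h3
    have h4 : 1 - (((m : ℝ) + 1 + 1) / (m + 1))⁻¹ = 1 / ((m : ℝ) + 1 + 1) := by
      field_simp; ring
    rw [h4] at h3
    push_cast at h2 ⊢
    have h5 : M / ((m : ℝ) + 1 + 1) = M * (1 / ((m : ℝ) + 1 + 1)) := by ring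
    nlinarith [mul_le_mul_of_nonneg_left h3 hM]

/-- Lebesgue function bound when the point lies outside the range of the nodes, in terms of
the increasing distances to the nodes. -/
theorem sum_inv_le_mul_alternating_sum {n : ℕ} (hn : 2 ≤ n) (d : ℕ → ℝ) {R C : ℝ} (hR : 0 ≤ R)
    (hC : 0 ≤ C) (h0 : 0 < d 0) (hmono : ∀ i < n, d i ≤ d (i + 1))
    (hd : d 0 ≤ R * (d 1 - d 0)) (hM : ∀ i, 1 ≤ i → i ≤ n → d 0 ≤ C / (i + 1) * d i) :
    ∑ i ∈ Finset.range (n + 1), 1 / d i ≤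
      (R + 1) * (1 + 2 * C * Real.log n) *
        ∑ i ∈ Finset.range (n + 1), (-1 : ℝ) ^ i / d i := by
  have hpos : ∀ i, i < n + 1 → 0 < d i := by
    intro i
    induction i with
    | zero => exact fun _ => h0
    | succ i ih => exact fun hi => (ih (by lia)).trans_le (hmono i (by lia))
  have hlow := le_alternating_sum_inv n d hR h0 hmono fun _ => hd
  have hup := sum_inv_le_add_mul_log n d (M := C / d 0) (by positivity) fun i hi hi' => by
    have := hM i hi hi'
    have hi0 := hpos i (by lia)
    rw [div_le_iff₀ hi0, div_right_comm, div_mul_eq_mul_div, le_div_iff₀ h0]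
    linarith
  have hn' : (2 : ℝ) ≤ n := by exact_mod_cast hn
  have hlog : Real.log (n + 1) ≤ 2 * Real.log n := by
    rw [← Real.log_rpow (by linarith)]
    apply Real.log_le_log (by linarith)
    norm_num
    nlinarith
  have hlog0 : 0 ≤ Real.log n := Real.log_nonneg (by linarith)
  calc _ ≤ 1 / d 0 + C / d 0 * Real.log (n + 1) := hup
    _ ≤ 1 / d 0 + C / d 0 * (2 * Real.log n) := by gcongr
    _ = (R + 1) * (1 + 2 * C * Real.log n) * (1 / (d 0 * (R + 1))) := by field_simp
    _ ≤ _ := by gcongr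

/-- Lebesgue function bound when the point lies between two nodes, in terms of the increasing
distances `d` and `e` to the nodes on either side. -/
theorem sum_inv_add_sum_inv_le {n l r : ℕ} (hl : l + 1 ≤ n) (hr : r + 1 ≤ n) (d e : ℕ → ℝ)
    {R C : ℝ} (hR : 0 ≤ R) (hC : 0 ≤ C) (hd0 : 0 < d 0) (he0 : 0 < e 0)
    (hdmono : ∀ i < l, d i ≤ d (i + 1)) (hemono : ∀ i < r, e i ≤ e (i + 1))
    (hd : 0 < l → d 0 + e 0 ≤ R * (d 1 - d 0)) (he : 0 < r → d 0 + e 0 ≤ R * (e 1 - e 0))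
    (hdC : ∀ i, 1 ≤ i → i ≤ l → d 0 + e 0 ≤ C / (i + 1) * (d i + e 0))
    (heC : ∀ i, 1 ≤ i → i ≤ r → d 0 + e 0 ≤ C / (i + 1) * (e i + d 0)) :
    ∑ i ∈ Finset.range (l + 1), 1 / d i + ∑ i ∈ Finset.range (r + 1), 1 / e i ≤
      (R + 1) * (1 + 2 * C * Real.log n) *
        (∑ i ∈ Finset.range (l + 1), (-1 : ℝ) ^ i / d i +
          ∑ i ∈ Finset.range (r + 1), (-1 : ℝ) ^ i / e i) := by
  have aux : ∀ (m : ℕ) (f : ℕ → ℝ) (b : ℝ), 0 < f 0 → 0 < b → (∀ i < m, f i ≤ f (i + 1)) →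
      (∀ i, 1 ≤ i → i ≤ m → f 0 + b ≤ C / (i + 1) * (f i + b)) →
      ∑ i ∈ Finset.range (m + 1), 1 / f i ≤
        1 / f 0 + (f 0 + b) / (f 0 * b) * C * Real.log (m + 1) := by
    intro m f b ha hb hmono hfC
    obtain ⟨a, hf⟩ : ∃ a, a = f 0 := ⟨_, rfl⟩
    rw [← hf] at ha hfC ⊢
    have hge : ∀ i, i < m + 1 → a ≤ f i := by
      intro i
      induction i with
      | zero => exact fun _ => hf.le
      | succ i ih => exact fun hi => (ih (by lia)).trans (hmono i (by lia))
    have := sum_inv_le_add_mul_log m f (M := (a + b) / (a * b) * C) (by positivity)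
      fun i hi hi' => by
        have h1 := hge i (by lia)
        have h2 := hfC i hi hi'
        have h3 : 0 < f i := ha.trans_le h1
        have h4 : a * b * (f i + b) ≤ (a + b) ^ 2 * f i := by
          nlinarith [mul_nonneg (mul_nonneg ha.le hb.le) h3.le,
            mul_le_mul_of_nonneg_left h1 (sq_nonneg b), mul_nonneg (sq_nonneg a) h3.le]
        have h5 : 0 ≤ C / ((i : ℝ) + 1) := by positivity
        have h6 : a * b ≤ (a + b) * (C / (i + 1)) * f i := by
          have := mul_le_mul_of_nonneg_left h4 h5
          have := mul_le_mul_of_nonneg_left h2 (mul_nonneg ha.le hb.le)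
          have hab : 0 < a + b := by linarith
          by_contra hcon
          push Not at hcon
          nlinarith [mul_lt_mul_of_pos_left hcon hab]
        rw [div_le_iff₀ h3]
        have h7 : (a + b) / (a * b) * C / (i + 1) * f i =
            ((a + b) * (C / (i + 1)) * f i) / (a * b) := by ring
        rw [h7, le_div_iff₀ (by positivity)]
        linarith
    rwa [← hf] at this
  have h1 := aux l d (e 0) hd0 he0 hdmono hdC
  have h2 := aux r e (d 0) he0 hd0 hemono fun i hi hi' => by
    linarith [heC i hi hi']
  have h3 := le_alternating_sum_inv l d hR hd0 hdmono fun h => by linarith [hd h]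
  have h4 := le_alternating_sum_inv r e hR he0 hemono fun h => by linarith [he h]
  have hlog0 : 0 ≤ Real.log n := Real.log_natCast_nonneg n
  set a := d 0
  set b := e 0
  calc _ ≤ (1 / a + (a + b) / (a * b) * C * Real.log (l + 1)) +
        (1 / b + (b + a) / (b * a) * C * Real.log (r + 1)) := add_le_add h1 h2
    _ ≤ (1 / a + (a + b) / (a * b) * C * Real.log n) +
        (1 / b + (b + a) / (b * a) * C * Real.log n) := by
      gcongr
      · exact_mod_cast hl
      · exact_mod_cast hr
    _ = (R + 1) * (1 + 2 * C * Real.log n) * (1 / (a * (R + 1)) + 1 / (b * (R + 1))) := by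
      field_simp
      ring
    _ ≤ _ := by gcongr

/-- Lebesgue function bound at a point to the left of all nodes. -/
theorem lebesgue_le_of_lt_nodes {n : ℕ} (hn : 2 ≤ n) (y : ℕ → ℝ) {x R C : ℝ} (hR : 0 ≤ R)
    (hC : 0 ≤ C) (hmono : ∀ i j, i < j → j ≤ n → y i < y j) (h : x < y 0)
    (hd : y 0 - x ≤ R * (y 1 - x - (y 0 - x)))
    (hM : ∀ i, 1 ≤ i → i ≤ n → y 0 - x ≤ C / (i + 1) * (y i - x)) :
    ∑ i ∈ Finset.range (n + 1), 1 / |x - y i| ≤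
      (R + 1) * (1 + 2 * C * Real.log n) *
        |∑ j ∈ Finset.range (n + 1), (-1 : ℝ) ^ j / (x - y j)| := by
  have hmono' : ∀ i j, i ≤ j → j ≤ n → y i ≤ y j := fun i j hij hj =>
    hij.eq_or_lt.elim (fun h => h ▸ le_rfl) fun h => (hmono i j h hj).le
  have hcoef : 0 ≤ (R + 1) * (1 + 2 * C * Real.log n) := by
    have := Real.log_natCast_nonneg n
    positivity
  have key := sum_inv_le_mul_alternating_sum hn (fun i => y i - x) hR hC (by linarith)
    (fun i hi => by have := hmono i (i + 1) (by lia) (by lia); linarith) hd hM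
  have habs : ∀ i ∈ Finset.range (n + 1), 1 / |x - y i| = 1 / (y i - x) := fun i hi => by
    rw [abs_sub_comm, abs_of_pos]
    linarith [hmono' 0 i (by lia) (by simpa [Nat.lt_succ_iff] using hi)]
  have hneg : ∀ i ∈ Finset.range (n + 1),
      (-1 : ℝ) ^ i / (x - y i) = -((-1 : ℝ) ^ i / (y i - x)) := fun i _ => by
    rw [← neg_sub, div_neg]
  rw [Finset.sum_congr rfl habs, Finset.sum_congr rfl hneg, Finset.sum_neg_distrib, abs_neg]
  exact key.trans (mul_le_mul_of_nonneg_left (le_abs_self _) hcoef)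

/-- Lebesgue function bound at a point to the right of all nodes. -/
theorem lebesgue_le_of_nodes_lt {n : ℕ} (hn : 2 ≤ n) (y : ℕ → ℝ) {x R C : ℝ} (hR : 0 ≤ R)
    (hC : 0 ≤ C) (hmono : ∀ i j, i < j → j ≤ n → y i < y j) (h : y n < x)
    (hd : x - y n ≤ R * (x - y (n - 1) - (x - y n)))
    (hM : ∀ i, 1 ≤ i → i ≤ n → x - y n ≤ C / (i + 1) * (x - y (n - i))) :
    ∑ i ∈ Finset.range (n + 1), 1 / |x - y i| ≤
      (R + 1) * (1 + 2 * C * Real.log n) *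
        |∑ j ∈ Finset.range (n + 1), (-1 : ℝ) ^ j / (x - y j)| := by
  have hmono' : ∀ i j, i ≤ j → j ≤ n → y i ≤ y j := fun i j hij hj =>
    hij.eq_or_lt.elim (fun h => h ▸ le_rfl) fun h => (hmono i j h hj).le
  have hcoef : 0 ≤ (R + 1) * (1 + 2 * C * Real.log n) := by
    have := Real.log_natCast_nonneg n
    positivity
  have key := sum_inv_le_mul_alternating_sum hn (fun i => x - y (n - i)) hR hC
    (by simpa using h)
    (fun i hi => by have := hmono (n - (i + 1)) (n - i) (by lia) (by lia); linarith)
    (by simpa using hd) (by simpa using hM)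
  have habs : ∀ i ∈ Finset.range (n + 1), 1 / |x - y i| = 1 / (x - y i) := fun i hi => by
    rw [abs_of_pos]
    linarith [hmono' i n (by simpa [Nat.lt_succ_iff] using hi) le_rfl]
  have hsum : ∑ j ∈ Finset.range (n + 1), (-1 : ℝ) ^ j / (x - y j) =
      (-1) ^ n * ∑ i ∈ Finset.range (n + 1), (-1 : ℝ) ^ i / (x - y (n - i)) :=
    sum_alternating_reflect n fun j => x - y j
  rw [Finset.sum_congr rfl habs, ← Finset.sum_range_reflect, hsum, abs_mul, abs_neg_one_pow,
    one_mul]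
  simp only [Nat.add_sub_cancel]
  exact key.trans (mul_le_mul_of_nonneg_left (le_abs_self _) hcoef)

/-- Lebesgue function bound at a point between two consecutive nodes. -/
theorem lebesgue_le_of_between_nodes {n : ℕ} (y : ℕ → ℝ) {x R C : ℝ} (hR : 0 ≤ R)
    (hC : 0 ≤ C) (hmono : ∀ i j, i < j → j ≤ n → y i < y j)
    (hratio : ∀ i, i + 2 ≤ n → y (i + 2) - y (i + 1) ≤ R * (y (i + 1) - y i) ∧
      y (i + 1) - y i ≤ R * (y (i + 2) - y (i + 1)))
    (hleft : ∀ k i, k + 1 ≤ n → i ≤ k →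
      y (k + 1) - y k ≤ C / (i + 1) * (y (k + 1) - y (k - i)))
    (hright : ∀ k i, k + 1 + i ≤ n →
      y (k + 1) - y k ≤ C / (i + 1) * (y (k + 1 + i) - y k))
    {k : ℕ} (hk : k < n) (hk1 : y k < x) (hk2 : x < y (k + 1)) :
    ∑ i ∈ Finset.range (n + 1), 1 / |x - y i| ≤
      (R + 1) * (1 + 2 * C * Real.log n) *
        |∑ j ∈ Finset.range (n + 1), (-1 : ℝ) ^ j / (x - y j)| := by
  have hmono' : ∀ i j, i ≤ j → j ≤ n → y i ≤ y j := fun i j hij hj =>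
    hij.eq_or_lt.elim (fun h => h ▸ le_rfl) fun h => (hmono i j h hj).le
  have hcoef : 0 ≤ (R + 1) * (1 + 2 * C * Real.log n) := by
    have := Real.log_natCast_nonneg n
    positivity
  have key := sum_inv_add_sum_inv_le (n := n) (l := k) (r := n - k - 1) (by lia) (by lia)
    (fun i => x - y (k - i)) (fun i => y (k + 1 + i) - x) hR hC (by simpa using hk1)
    (by simpa using hk2)
    (fun i hi => by have := hmono (k - (i + 1)) (k - i) (by lia) (by lia); linarith)
    (fun i hi => by
      have := hmono (k + 1 + i) (k + 1 + (i + 1)) (by lia) (by lia); linarith)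
    (by
      intro hk0
      obtain ⟨m, rfl⟩ : ∃ m, k = m + 1 := ⟨k - 1, by lia⟩
      have := (hratio m (by lia)).1
      simp only [Nat.sub_zero, add_zero, Nat.add_sub_cancel]
      linarith)
    (by
      intro hk0
      have := (hratio k (by lia)).2
      simp only [Nat.sub_zero, add_zero, add_assoc, Nat.reduceAdd]
      linarith)
    (by
      intro i _ hi
      have := hleft k i (by lia) hi
      simp only [Nat.sub_zero, add_zero]
      rw [show x - y (k - i) + (y (k + 1) - x) = y (k + 1) - y (k - i) by ring]
      linarith)
    (by
      intro i _ hi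
      have := hright k i (by lia)
      simp only [Nat.sub_zero, add_zero]
      rw [show y (k + 1 + i) - x + (x - y k) = y (k + 1 + i) - y k by ring]
      linarith)
  have hsplit : ∀ f : ℕ → ℝ, ∑ i ∈ Finset.range (n + 1), f i =
      ∑ i ∈ Finset.range (k + 1), f i +
        ∑ i ∈ Finset.range (n - k - 1 + 1), f (k + 1 + i) := by
    intro f
    rw [← Finset.sum_range_add]
    congr 2
    lia
  have habs1 : ∀ i ∈ Finset.range (k + 1), 1 / |x - y i| = 1 / (x - y i) := fun i hi => by
    rw [abs_of_pos]
    linarith [hmono' i k (by simpa [Nat.lt_succ_iff] using hi) hk.le]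
  have habs2 : ∀ i ∈ Finset.range (n - k - 1 + 1),
      1 / |x - y (k + 1 + i)| = 1 / (y (k + 1 + i) - x) := fun i hi => by
    rw [abs_sub_comm, abs_of_pos]
    have := Finset.mem_range.1 hi
    linarith [hmono' (k + 1) (k + 1 + i) (by lia) (by lia)]
  have hneg : ∀ i ∈ Finset.range (n - k - 1 + 1), (-1 : ℝ) ^ (k + 1 + i) / (x - y (k + 1 + i)) =
      (-1) ^ k * ((-1 : ℝ) ^ i / (y (k + 1 + i) - x)) := fun i _ => by
    rw [← neg_sub (y (k + 1 + i)) x, div_neg, pow_add, pow_succ]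
    ring
  have hsum := sum_alternating_reflect k fun j => x - y j
  rw [hsplit, hsplit fun j => (-1 : ℝ) ^ j / (x - y j), Finset.sum_congr rfl habs1,
    Finset.sum_congr rfl habs2, Finset.sum_congr rfl hneg, hsum, ← Finset.mul_sum, ← mul_add,
    abs_mul, abs_neg_one_pow, one_mul, ← Finset.sum_range_reflect]
  simp only [Nat.add_sub_cancel]
  exact key.trans (mul_le_mul_of_nonneg_left (le_abs_self _) hcoef)

set_option maxHeartbeats 1000000 in
/-- The Lebesgue function of Berrut's rational interpolant at an (n+1)-element subset
of the Chebyshev points of the second kind (with `s` points removed) is bounded by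
`((s+1)(s+3)π²/4 + 1)(1 + π²(s+1) ln(N-s))`. -/
theorem berrut_lebesgue_bound_chebyshev_subset
    (N s : ℕ) (hs : s + 2 < N) (n : ℕ) (hn : n = N - s)
    (α : ℕ → ℕ) (hα : ∀ k, k < n → α k < α (k + 1)) (hαN : α n ≤ N)
    (y : ℕ → ℝ) (hy : ∀ k, y k = -Real.cos (α k * Real.pi / N)) :
    ∀ x ∈ Set.Icc (-1 : ℝ) 1, (∀ i ≤ n, x ≠ y i) →
      (∑ i ∈ Finset.range (n + 1), 1 / |x - y i|) ≤
        ((s + 1) * (s + 3) * Real.pi ^ 2 / 4 + 1) *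
          (1 + Real.pi ^ 2 * (s + 1) * Real.log ((N : ℝ) - s)) *
          |∑ j ∈ Finset.range (n + 1), (-1 : ℝ) ^ j / (x - y j)| := by
  intro x hx hne
  have hNn : N = n + s := by lia
  have hn3 : 3 ≤ n := by lia
  have hN0 : (0 : ℝ) < N := by exact_mod_cast (by lia : 0 < N)
  have hgap : ∀ g i, i + g ≤ n → α i + g ≤ α (i + g) := by
    intro g
    induction g with
    | zero => intro i _; simp
    | succ g ih =>
      intro i hi
      have h1 := ih i (by lia)
      have h2 := hα (i + g) (by lia)
      rw [← add_assoc]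
      lia
  have hgap' : ∀ i j, i ≤ j → j ≤ n → α i + (j - i) ≤ α j := by
    intro i j hij hj
    have := hgap (j - i) i (by lia)
    rwa [Nat.add_sub_cancel' hij] at this
  have hmono : ∀ i j, i < j → j ≤ n → y i < y j := by
    intro i j hij hj
    rw [hy, hy]
    have h1 : (α i : ℝ) < α j := by exact_mod_cast (by have := hgap' i j hij.le hj; lia)
    have h2 : (α j : ℝ) ≤ N := by exact_mod_cast (by have := hgap' j n hj le_rfl; lia)
    apply neg_lt_neg
    apply Real.cos_lt_cos_of_nonneg_of_le_pi (by positivity)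
    · rw [div_le_iff₀ hN0]; nlinarith [Real.pi_pos]
    · gcongr
  obtain ⟨R, hRdef⟩ : ∃ R : ℝ, R = (s + 1) * (s + 3) * Real.pi ^ 2 / 4 := ⟨_, rfl⟩
  obtain ⟨C, hCdef⟩ : ∃ C : ℝ, C = Real.pi ^ 2 * (s + 1) / 2 := ⟨_, rfl⟩
  have hR : 0 ≤ R := by rw [hRdef]; positivity
  have hC : 0 ≤ C := by rw [hCdef]; positivity
  have hNs : (N : ℝ) - s = n := by rw [hNn]; push_cast; ring
  have hconst : (1 + Real.pi ^ 2 * (s + 1) * Real.log ((N : ℝ) - s)) =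
      1 + 2 * C * Real.log n := by rw [hNs, hCdef]; ring
  rw [hconst, ← hRdef]
  have hcosα : ∀ i, Real.cos (α i * Real.pi / N) = -y i := fun i => by rw [hy, neg_neg]
  have hs0 : (0 : ℝ) ≤ s := s.cast_nonneg
  have hratio : ∀ i, i + 2 ≤ n → y (i + 2) - y (i + 1) ≤ R * (y (i + 1) - y i) ∧
      y (i + 1) - y i ≤ R * (y (i + 2) - y (i + 1)) := by
    intro i hi
    have h0 := hgap' 0 i (by lia) (by lia)
    have h1 := hgap' i (i + 1) (by lia) (by lia)
    have h2 := hgap' (i + 1) (i + 2) (by lia) (by lia)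
    have h3 := hgap' (i + 2) n (by lia) (by lia)
    have := cos_sub_cos_le_of_adjacent (p := α i) (q := α (i + 1)) (r := α (i + 2)) hN0 hs0
      (by positivity) (by exact_mod_cast (by lia : α i + 1 ≤ α (i + 1)))
      (by exact_mod_cast (by lia : α (i + 1) + 1 ≤ α (i + 2)))
      (by exact_mod_cast (by lia : α (i + 2) ≤ N))
      (by exact_mod_cast (by lia : α (i + 2) ≤ α i + s + 2))
    rw [← hRdef] at this
    simp only [hy, neg_sub_neg]
    exact this
  have hleft : ∀ k i, k + 1 ≤ n → i ≤ k →
      y (k + 1) - y k ≤ C / (i + 1) * (y (k + 1) - y (k - i)) := by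
    intro k i hk hi
    have h0 := hgap' 0 k (by lia) (by lia)
    have h1 := hgap' (k - i) k (by lia) (by lia)
    have h2 := hgap' k (k + 1) (by lia) (by lia)
    have h3 := hgap' (k + 1) n (by lia) (by lia)
    have h4 : (α (k + 1) : ℝ) ≤ α k + (s + 1) := by
      exact_mod_cast (by lia : α (k + 1) ≤ α k + (s + 1))
    have h5 : (α (k - i) : ℝ) + (i + 1) ≤ α (k + 1) := by
      exact_mod_cast (by lia : α (k - i) + (i + 1) ≤ α (k + 1))
    simp only [hy, neg_sub_neg, hCdef]
    apply cos_sub_cos_le_div_mul_right hN0 hs0 (by positivity)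
      (by exact_mod_cast (by lia : α (k - i) ≤ α k))
      (by exact_mod_cast (by lia : α k ≤ α (k + 1)))
      (by exact_mod_cast (by lia : α (k + 1) ≤ N)) (by positivity)
    apply mul_le_mul <;> linarith
  have hright : ∀ k i, k + 1 + i ≤ n →
      y (k + 1) - y k ≤ C / (i + 1) * (y (k + 1 + i) - y k) := by
    intro k i hi
    have h0 := hgap' 0 k (by lia) (by lia)
    have h1 := hgap' k (k + 1) (by lia) (by lia)
    have h2 := hgap' (k + 1) (k + 1 + i) (by lia) (by lia)
    have h3 := hgap' (k + 1) n (by lia) (by lia)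
    have h3' := hgap' (k + 1 + i) n (by lia) (by lia)
    have h4 : (α (k + 1) : ℝ) ≤ α k + (s + 1) := by
      exact_mod_cast (by lia : α (k + 1) ≤ α k + (s + 1))
    have h5 : (α k : ℝ) + (i + 1) ≤ α (k + 1 + i) := by
      exact_mod_cast (by lia : α k + (i + 1) ≤ α (k + 1 + i))
    simp only [hy, neg_sub_neg, hCdef]
    apply cos_sub_cos_le_div_mul_left hN0 hs0 (by positivity)
      (by exact_mod_cast (by lia : α k ≤ α (k + 1)))
      (by exact_mod_cast (by lia : α (k + 1) ≤ α (k + 1 + i)))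
      (by exact_mod_cast (by lia : α (k + 1 + i) ≤ N)) (by positivity)
    apply mul_le_mul <;> linarith
  have hscale : ∀ a b t c : ℝ, 0 ≤ t → a ≤ b → t ≤ a → 0 ≤ c → a ≤ c * b →
      a - t ≤ c * (b - t) := by
    intro a b t c ht hab hta hc habc
    rcases le_total c 1 with h | h <;> nlinarith
  have hcos0 : Real.cos (((0 : ℕ) : ℝ) * Real.pi / N) = 1 := by simp
  have hcosN : Real.cos ((N : ℝ) * Real.pi / N) = -1 := by
    rw [mul_div_cancel_left₀ _ hN0.ne', Real.cos_pi]
  rcases lt_trichotomy x (y 0) with h | h | h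
  · have hα0 : 1 ≤ α 0 := by
      by_contra! hcon
      have h0 := hy 0
      rw [Nat.lt_one_iff.1 hcon, hcos0] at h0
      linarith [hx.1]
    exact lebesgue_le_of_lt_nodes (by lia) y hR hC hmono h
      (by
        have h1 := hgap' 0 1 (by lia) (by lia)
        have h2 := hgap' 1 n (by lia) (by lia)
        have := (cos_sub_cos_le_of_adjacent (p := (0 : ℕ)) (q := α 0) (r := α 1) hN0 hs0
          (Nat.cast_nonneg _) (by exact_mod_cast (by lia : 0 + 1 ≤ α 0))
          (by exact_mod_cast (by lia : α 0 + 1 ≤ α 1)) (by exact_mod_cast (by lia : α 1 ≤ N))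
          (by exact_mod_cast (by lia : α 1 ≤ 0 + s + 2))).2
        rw [← hRdef, hcos0, hcosα 0, hcosα 1] at this
        linarith [hx.1])
      (by
        intro i hi1 hi
        have h1 := hgap' 0 i (by lia) (by lia)
        have h2 := hgap' i n (by lia) (by lia)
        have h3 : (α 0 : ℝ) ≤ s := by exact_mod_cast (by lia : α 0 ≤ s)
        have h4 : (α 0 : ℝ) + i ≤ α i := by exact_mod_cast (by lia : α 0 + i ≤ α i)
        have := cos_sub_cos_le_div_mul_left (p := (0 : ℕ)) (q := α 0) (r := α i)
          (c := i + 1) hN0 hs0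
          (Nat.cast_nonneg _) (by simp) (by exact_mod_cast (by lia : α 0 ≤ α i))
          (by exact_mod_cast (by lia : α i ≤ N)) (by positivity)
          (by push_cast; nlinarith [mul_nonneg (sub_nonneg.2 h3) (Nat.cast_nonneg (α := ℝ) i)])
        rw [← hCdef, hcos0, hcosα, hcosα] at this
        have := hscale (y 0 + 1) (y i + 1) (x + 1) (C / (i + 1)) (by linarith [hx.1])
          (by linarith [hmono 0 i (by lia) hi]) (by linarith) (by positivity)
          (by linarith)
        linarith)
  · exact absurd h (hne 0 (by lia))
  rcases lt_trichotomy (y n) x with h' | h' | h'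
  · have hαN1 : α n + 1 ≤ N := by
      by_contra! hcon
      have h0 := hy n
      rw [(by lia : α n = N), hcosN] at h0
      linarith [hx.2]
    exact lebesgue_le_of_nodes_lt (by lia) y hR hC hmono h'
      (by
        have h1 := hgap' (n - 1) n (by lia) (by lia)
        have h2 := hgap' 0 (n - 1) (by lia) (by lia)
        have := (cos_sub_cos_le_of_adjacent (p := α (n - 1)) (q := α n) (r := N) hN0 hs0
          (by positivity) (by exact_mod_cast (by lia : α (n - 1) + 1 ≤ α n))
          (by exact_mod_cast hαN1) le_rfl
          (by exact_mod_cast (by lia : N ≤ α (n - 1) + s + 2))).1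
        rw [← hRdef, hcosN, hcosα, hcosα] at this
        linarith [hx.2])
      (by
        intro i hi1 hi
        have h1 := hgap' (n - i) n (by lia) (by lia)
        have h2 := hgap' 0 (n - i) (by lia) (by lia)
        have h2' := hgap' 0 n (by lia) (by lia)
        have h3 : (N : ℝ) ≤ α n + s := by exact_mod_cast (by lia : N ≤ α n + s)
        have h4 : (α (n - i) : ℝ) + i ≤ α n := by
          exact_mod_cast (by lia : α (n - i) + i ≤ α n)
        have h5 : (α n : ℝ) ≤ N := by exact_mod_cast hαN
        have := cos_sub_cos_le_div_mul_right (p := α (n - i)) (q := α n) (r := N)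
          (c := i + 1) hN0 hs0
          (by positivity) (by exact_mod_cast (by lia : α (n - i) ≤ α n)) h5 le_rfl
          (by positivity)
          (by nlinarith [mul_nonneg (sub_nonneg.2 h3) (Nat.cast_nonneg (α := ℝ) i)])
        rw [← hCdef, hcosN, hcosα, hcosα] at this
        have := hscale (1 - y n) (1 - y (n - i)) (1 - x) (C / (i + 1)) (by linarith [hx.2])
          (by linarith [hmono (n - i) n (by lia) le_rfl]) (by linarith) (by positivity)
          (by linarith)
        linarith)
  · exact absurd h'.symm (hne n le_rfl)
  obtain ⟨k, hk, hk1, hk2⟩ : ∃ k < n, y k < x ∧ x < y (k + 1) := by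
    by_contra! hcon
    have : ∀ k ≤ n, y k < x := by
      intro k
      induction k with
      | zero => exact fun _ => h
      | succ k ih =>
        exact fun hk => lt_of_le_of_ne (hcon k (by lia) (ih (by lia))) (hne _ hk).symm
    linarith [this n le_rfl]
  exact lebesgue_le_of_between_nodes y hR hC hmono hratio hleft hright hk hk1 hk2
end

section
/- Let n ≥ 2 and let x_0 < x_1 < ... < x_n be real numbers, and suppose there exist constants C ≥ 1 and R ≥ 1 such that: (1) for all 0 ≤ j ≤ k ≤ n-1, (x_{k+1} - x_k)/(x_{k+1} - x_j) ≤ C/(k+1-j); (2) for all 0 ≤ k ≤ n-1 and k+1 ≤ j ≤ n, (x_{k+1} - x_k)/(x_j - x_k) ≤ C/(j-k); (3) for all 1 ≤ k ≤ n-1, 1/R ≤ (x_{k+1} - x_k)/(x_k - x_{k-1}) ≤ R. Then for every x ∈ [x_0, x_n] with x ≠ x_i for all i, Σ_{i=0}^n 1/|x - x_i| ≤ (R+1)(1 + 2C·ln n) · |Σ_{j=0}^n (-1)^j/(x - x_j)|. -/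
open Finset Real

theorem alternating_sum_mem_Icc (m : ℕ) (u : ℕ → ℝ) (h0 : ∀ i < m, 0 ≤ u i)
    (hu : ∀ i, i + 1 < m → u (i + 1) ≤ u i) :
    0 ≤ ∑ i ∈ range m, (-1) ^ i * u i ∧ (0 < m → ∑ i ∈ range m, (-1) ^ i * u i ≤ u 0) := by
  induction m generalizing u with
  | zero => simp
  | succ m ih =>
    obtain ⟨ihl, ihu⟩ := ih (fun i => u (i + 1)) (fun i hi => h0 _ (by omega))
      (fun i hi => hu _ (by omega))
    have hs : ∑ i ∈ range (m + 1), (-1) ^ i * u i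
        = u 0 - ∑ i ∈ range m, (-1) ^ i * u (i + 1) := by
      rw [sum_range_succ', sub_eq_add_neg, ← sum_neg_distrib, add_comm]
      simp [pow_succ]
    rw [hs]
    refine ⟨?_, fun _ => by linarith⟩
    rcases m with _ | m
    · simpa using h0 0 (by omega)
    · have := ihu (by omega)
      have := hu 0 (by omega)
      simp only [zero_add] at *
      linarith

/-- Lower bound for the alternating sum of reciprocal distances to the nodes lying on one side
of the evaluation point. -/
theorem inv_le_mul_alternating_sum_inv {m : ℕ} (hm : 0 < m) {d : ℕ → ℝ} {h R : ℝ}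
    (hd0 : 0 < d 0) (hd : ∀ i, i + 1 < m → d i < d (i + 1)) (hh : d 0 ≤ h) (hR : 1 ≤ R)
    (hgap : 1 < m → h ≤ R * (d 1 - d 0)) :
    1 / (R + 1) ≤ d 0 * ∑ i ∈ range m, (-1) ^ i * (1 / d i) := by
  have hpos : ∀ i < m, 0 < d i := by
    intro i
    induction i with
    | zero => exact fun _ => hd0
    | succ i ih => exact fun hi => (ih (by omega)).trans (hd i hi)
  have hanti : ∀ i, i + 1 < m → 1 / d (i + 1) ≤ 1 / d i := fun i hi =>
    one_div_le_one_div_of_le (hpos i (by omega)) (hd i hi).le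
  obtain ⟨m, rfl⟩ : ∃ l, m = l + 1 := ⟨m - 1, by omega⟩
  have hs : ∑ i ∈ range (m + 1), (-1) ^ i * (1 / d i)
      = 1 / d 0 - ∑ i ∈ range m, (-1) ^ i * (1 / d (i + 1)) := by
    rw [sum_range_succ', sub_eq_add_neg, ← sum_neg_distrib, add_comm]
    simp [pow_succ]
  rw [hs]
  rcases m with _ | m
  · rw [range_zero, sum_empty, sub_zero, mul_one_div_cancel hd0.ne', div_le_one (by linarith)]
    linarith
  · have hle := (alternating_sum_mem_Icc (m + 1) (fun i => 1 / d (i + 1))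
      (fun i hi => (one_div_pos.2 (hpos _ (by omega))).le)
      (fun i hi => hanti _ (by omega))).2 (by omega)
    have hd1 := hpos 1 (by omega)
    have hg := hgap (by omega)
    calc 1 / (R + 1) ≤ d 0 * (1 / d 0 - 1 / d 1) := by
          have : d 0 * (1 / d 0 - 1 / d 1) = (d 1 - d 0) / d 1 := by field_simp
          rw [this, div_le_div_iff₀ (by linarith) hd1]
          nlinarith
      _ ≤ _ := by
          simp only [zero_add] at hle
          gcongr

/-- Upper bound for the sum of reciprocal distances to the nodes lying on one side of the
evaluation point. -/
theorem mul_sum_inv_le_one_add_log {m n : ℕ} (hm : 0 < m) (hmn : m ≤ n) {d : ℕ → ℝ} {C : ℝ}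
    (hC : 0 ≤ C) (hd0 : d 0 ≠ 0) (hd : ∀ i, i + 1 < m → d 0 / d (i + 1) ≤ C / ((i : ℝ) + 2)) :
    d 0 * ∑ i ∈ range m, 1 / d i ≤ 1 + C * Real.log n := by
  have hH := harmonic_le_one_add_log m
  have hlog : Real.log m ≤ Real.log n := Real.log_le_log (by positivity) (by exact_mod_cast hmn)
  obtain ⟨m, rfl⟩ : ∃ l, m = l + 1 := ⟨m - 1, by omega⟩
  rw [harmonic, sum_range_succ'] at hH
  rw [sum_range_succ', mul_add, mul_one_div_cancel hd0, mul_sum, add_comm]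
  have hsum : ∑ i ∈ range m, d 0 * (1 / d (i + 1))
      ≤ C * ∑ i ∈ range m, (((i + 1 : ℕ) : ℝ) + 1)⁻¹ := by
    rw [mul_sum]
    refine sum_le_sum fun i hi => ?_
    rw [mem_range] at hi
    have hi2 : ((i + 1 : ℕ) : ℝ) + 1 = i + 2 := by push_cast; ring
    rw [hi2, mul_one_div, ← div_eq_mul_inv]
    exact hd i (by omega)
  push_cast at hH hsum hlog
  have : ∑ i ∈ range m, ((i : ℝ) + 1 + 1)⁻¹ ≤ Real.log n := by
    norm_num at hH
    linarith
  nlinarith [mul_le_mul_of_nonneg_left this hC]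

/-- For a family of well-spaced points with constants `C, R ≥ 1`, the Lebesgue function
of Berrut's rational interpolant is bounded by `(R+1)(1 + 2C ln n)`. -/
theorem berrut_lebesgue_bound_well_spaced
    (n : ℕ) (hn : 2 ≤ n) (x : ℕ → ℝ)
    (hmono : ∀ i, i < n → x i < x (i + 1))
    (C R : ℝ) (hC : 1 ≤ C) (hR : 1 ≤ R)
    (h1 : ∀ j k : ℕ, j ≤ k → k + 1 ≤ n →
      (x (k + 1) - x k) / (x (k + 1) - x j) ≤ C / ((k : ℝ) + 1 - j))
    (h2 : ∀ k j : ℕ, k + 1 ≤ j → j ≤ n →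
      (x (k + 1) - x k) / (x j - x k) ≤ C / ((j : ℝ) - k))
    (h3 : ∀ k : ℕ, 1 ≤ k → k + 1 ≤ n →
      1 / R ≤ (x (k + 1) - x k) / (x k - x (k - 1)) ∧
      (x (k + 1) - x k) / (x k - x (k - 1)) ≤ R) :
    ∀ z ∈ Set.Icc (x 0) (x n), (∀ i ≤ n, z ≠ x i) →
      (∑ i ∈ Finset.range (n + 1), 1 / |z - x i|) ≤
        (R + 1) * (1 + 2 * C * Real.log n) *
          |∑ j ∈ Finset.range (n + 1), (-1 : ℝ) ^ j / (z - x j)| := by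
  intro z hz hne
  have hlt : ∀ i j, i < j → j ≤ n → x i < x j := by
    intro i j hij
    induction j, hij using Nat.le_induction with
    | base => exact fun hj => hmono i hj
    | succ j _ ih => exact fun hj => (ih (by omega)).trans (hmono j hj)
  obtain ⟨k, hkn, hk1, hk2⟩ : ∃ k, k < n ∧ x k < z ∧ z < x (k + 1) := by
    by_contra! hcon
    have hall : ∀ i, i ≤ n → x i < z := by
      intro i
      induction i with
      | zero => exact fun h => lt_of_le_of_ne hz.1 (hne 0 h).symm
      | succ i ih =>
        exact fun h => lt_of_le_of_ne (hcon i h (ih (by omega))) (hne _ h).symm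
    exact (hall n le_rfl).not_ge hz.2
  set d : ℕ → ℝ := fun i => z - x (k - i) with hd
  set e : ℕ → ℝ := fun i => x (k + 1 + i) - z with he
  have hd0 : 0 < d 0 := sub_pos.2 hk1
  have he0 : 0 < e 0 := sub_pos.2 hk2
  have hde : d 0 + e 0 = x (k + 1) - x k := by simp [hd, he]
  have hdmono : ∀ i, i + 1 < k + 1 → d i < d (i + 1) := fun i hi =>
    sub_lt_sub_left (hlt _ _ (by omega) (by omega)) z
  have hemono : ∀ i, i + 1 < n - k → e i < e (i + 1) := fun i hi =>
    sub_lt_sub_right (hlt _ _ (by omega) (by omega)) z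
  have hxd : ∀ i ≤ k, 0 < d i := fun i hi => by
    rcases i with _ | i
    · exact hd0
    · exact sub_pos.2 ((hlt _ _ (by omega) (by omega)).trans hk1)
  have hxe : ∀ i < n - k, 0 < e i := fun i hi => by
    rcases i with _ | i
    · exact he0
    · exact sub_pos.2 (hk2.trans (hlt _ _ (by omega) (by omega)))
  have hsplit : ∀ f : ℕ → ℝ, ∑ i ∈ range (n + 1), f i
      = ∑ i ∈ range (k + 1), f (k - i) + ∑ i ∈ range (n - k), f (k + 1 + i) := by
    intro f
    rw [show n + 1 = (k + 1) + (n - k) by omega, sum_range_add, ← sum_range_reflect]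
    simp
  have hN : ∑ i ∈ range (n + 1), 1 / |z - x i|
      = ∑ i ∈ range (k + 1), 1 / d i + ∑ i ∈ range (n - k), 1 / e i := by
    rw [hsplit]
    congr 1
    · refine sum_congr rfl fun i hi => ?_
      rw [abs_of_pos (hxd i (by rw [mem_range] at hi; omega))]
    · refine sum_congr rfl fun i hi => ?_
      rw [abs_sub_comm, abs_of_pos (hxe i (mem_range.1 hi))]
  have hD : ∑ j ∈ range (n + 1), (-1 : ℝ) ^ j / (z - x j)
      = (-1) ^ k * (∑ i ∈ range (k + 1), (-1) ^ i * (1 / d i)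
        + ∑ i ∈ range (n - k), (-1) ^ i * (1 / e i)) := by
    rw [hsplit, mul_add, mul_sum, mul_sum]
    congr 1
    · refine sum_congr rfl fun i hi => ?_
      have hi' : i ≤ k := by rw [mem_range] at hi; omega
      have hsign : (-1 : ℝ) ^ k * (-1) ^ i = (-1) ^ (k - i) := by
        rw [← pow_add, show k + i = (k - i) + 2 * i by omega, pow_add, pow_mul]
        simp
      rw [← mul_assoc, hsign, mul_one_div]
    · refine sum_congr rfl fun i hi => ?_
      rw [← mul_assoc, mul_one_div, ← neg_sub (x _) z, div_neg, ← neg_div, pow_add, pow_succ]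
      simp [he]
  have hNd : d 0 * ∑ i ∈ range (k + 1), 1 / d i ≤ 1 + C * Real.log n := by
    refine mul_sum_inv_le_one_add_log (by omega) (by omega) (by linarith) hd0.ne' fun i hi => ?_
    have h := h1 (k - (i + 1)) k (by omega) (by omega)
    rw [Nat.cast_sub (by omega)] at h
    push_cast at h
    rw [show (k : ℝ) + 1 - (k - (i + 1)) = i + 2 by ring] at h
    refine le_trans ?_ h
    have hm := hdmono i hi
    have hp := hxd (i + 1) (by omega)
    have hx := hlt (k - (i + 1)) k (by omega) (by omega)
    rw [div_le_div_iff₀ hp (by linarith)]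
    simp only [hd, Nat.sub_zero] at *
    nlinarith
  have hNe : e 0 * ∑ i ∈ range (n - k), 1 / e i ≤ 1 + C * Real.log n := by
    refine mul_sum_inv_le_one_add_log (by omega) (by omega) (by linarith) he0.ne' fun i hi => ?_
    have h := h2 k (k + 1 + (i + 1)) (by omega) (by omega)
    push_cast at h
    rw [show (k : ℝ) + 1 + (i + 1) - k = i + 2 by ring] at h
    refine le_trans ?_ h
    have hp := hxe (i + 1) (by omega)
    have hx := hlt (k + 1) (k + 1 + (i + 1)) (by omega) (by omega)
    rw [div_le_div_iff₀ hp (by linarith)]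
    simp only [he, add_zero] at *
    nlinarith
  have hDd := inv_le_mul_alternating_sum_inv (h := x (k + 1) - x k) (R := R)
    (Nat.succ_pos k) hd0 hdmono (by linarith) hR fun hk => by
      have h := (h3 k (by omega) (by omega)).2
      rw [div_le_iff₀ (sub_pos.2 (hlt _ _ (by omega) (by omega)))] at h
      simpa [hd] using h
  have hDe := inv_le_mul_alternating_sum_inv (h := x (k + 1) - x k) (R := R)
    (Nat.sub_pos_of_lt hkn) he0 hemono (by linarith) hR fun hk => by
      have h := (h3 (k + 1) (by omega) (by omega)).1
      rw [Nat.add_sub_cancel, div_le_div_iff₀ (by linarith) (by linarith)] at h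
      simp only [he, add_zero]
      linarith
  have hlog : 0 ≤ C * Real.log n :=
    mul_nonneg (by linarith) (Real.log_nonneg (by exact_mod_cast (by omega : 1 ≤ n)))
  rw [hN, hD, abs_mul, abs_pow, abs_neg, abs_one, one_pow, one_mul]
  set P := ∑ i ∈ range (k + 1), 1 / d i
  set Q := ∑ i ∈ range (n - k), 1 / e i
  set S := ∑ i ∈ range (k + 1), (-1) ^ i * (1 / d i)
  set T := ∑ i ∈ range (n - k), (-1) ^ i * (1 / e i)
  set L := C * Real.log n
  rw [mul_assoc 2 C]
  have hupper : d 0 * e 0 * (P + Q) ≤ (d 0 + e 0) * (1 + L) := by nlinarith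
  have hlower : d 0 + e 0 ≤ (R + 1) * (d 0 * e 0 * (S + T)) := by
    rw [div_le_iff₀ (by linarith)] at hDd hDe
    nlinarith
  have hST : 0 ≤ S + T := by
    have hR1 : 0 < 1 / (R + 1) := by positivity
    exact add_nonneg (pos_of_mul_pos_right (hR1.trans_le hDd) hd0.le).le
      (pos_of_mul_pos_right (hR1.trans_le hDe) he0.le).le
  rw [abs_of_nonneg hST]
  refine le_of_mul_le_mul_left (hupper.trans ?_) (mul_pos hd0 he0)
  calc (d 0 + e 0) * (1 + L) ≤ (R + 1) * (d 0 * e 0 * (S + T)) * (1 + 2 * L) :=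
        mul_le_mul hlower (by linarith) (by linarith) (by positivity)
    _ = _ := by ring
end

section
/- Let n ≥ 0, let x_0, ..., x_n be distinct real numbers, let f_0, ..., f_n be real values, set w_i = 1/Π_{k≠i}(x_i - x_k), and let P be the unique polynomial of degree at most n with P(x_i) = f_i for all i. Then for every real x with x ≠ x_i for all i: Σ_{j=0}^n w_j/(x - x_j) ≠ 0 and P(x) = (Σ_{i=0}^n (w_i/(x - x_i)) f_i) / (Σ_{j=0}^n w_j/(x - x_j)). -/
open Finset Polynomial

/-- The second (true) barycentric formula for Lagrange polynomial interpolation: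
with barycentric weights `w_i = 1/∏_{k≠i}(x_i - x_k)`, the denominator
`Σ w_j/(x - x_j)` never vanishes away from the nodes, and the interpolating
polynomial equals the barycentric quotient. -/
theorem barycentric_formula
    (n : ℕ) (x : ℕ → ℝ) (f : ℕ → ℝ)
    (hx : ∀ i ≤ n, ∀ j ≤ n, x i = x j → i = j)
    (P : Polynomial ℝ) (hdeg : P.natDegree ≤ n)
    (hinterp : ∀ i ≤ n, P.eval (x i) = f i) :
    ∀ z : ℝ, (∀ i ≤ n, z ≠ x i) →
      (∑ j ∈ Finset.range (n + 1),
        (1 / ∏ k ∈ (Finset.range (n + 1)).erase j, (x j - x k)) / (z - x j)) ≠ 0 ∧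
      P.eval z =
        (∑ i ∈ Finset.range (n + 1),
          ((1 / ∏ k ∈ (Finset.range (n + 1)).erase i, (x i - x k)) / (z - x i)) * f i) /
        (∑ j ∈ Finset.range (n + 1),
          (1 / ∏ k ∈ (Finset.range (n + 1)).erase j, (x j - x k)) / (z - x j)) := by
  intro z hz
  have hinj : Set.InjOn x (Finset.range (n + 1)) := fun i hi j hj h =>
    hx i (Finset.mem_range_succ_iff.mp hi) j (Finset.mem_range_succ_iff.mp hj) h
  have hne : (Finset.range (n + 1)).Nonempty := Finset.nonempty_range_add_one
  have hz' : ∀ i ∈ Finset.range (n + 1), z ≠ x i := fun i hi =>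
    hz i (Finset.mem_range_succ_iff.mp hi)
  have hP : P = Lagrange.interpolate (Finset.range (n + 1)) x f := by
    refine Lagrange.eq_interpolate_of_eval_eq f hinj ?_ fun i hi =>
      hinterp i (Finset.mem_range_succ_iff.mp hi)
    rw [Finset.card_range]
    exact P.degree_le_natDegree.trans_lt (by exact_mod_cast Nat.lt_succ_of_le hdeg)
  have hw : ∀ i, (1 / ∏ k ∈ (Finset.range (n + 1)).erase i, (x i - x k)) / (z - x i) =
      Lagrange.nodalWeight (Finset.range (n + 1)) x i * (z - x i)⁻¹ := fun i => by
    rw [Lagrange.nodalWeight, Finset.prod_inv_distrib, one_div, div_eq_mul_inv]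
  simp only [hw]
  exact ⟨Lagrange.sum_nodalWeight_mul_inv_sub_ne_zero hinj hz' hne,
    hP ▸ Lagrange.eval_interpolate_not_at_node' f hinj hne hz'⟩
end
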